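/- Let f be the local rule of width 4 with code number 56528, and define g : ℤ^4 → ℤ by g(x_0,x_1,x_2,x_3) = x_1 − 1 + δ_{2, x_2 − x_1}. Then for every strictly increasing s : ℤ → ℤ, the function t = g_{∞,1}(s) is strictly increasing and φ(t) = f_∞(φ(s)). -/

import Mathlib

/-- For a (strictly increasing) `s : ℤ → ℤ`, `phi s` is the occupancy bisequence:
`phi s i = 1` iff `i` lies in the range of `s`. -/
noncomputable def phi (s : ℤ → ℤ) (i : ℤ) : Fin 2 :=
  haveI := Classical.propDecidable (i ∈ Set.range s)
  if i ∈ Set.range s then 1 else 0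

/-- The local rule of width 4 with code number `C`: `f(x₁,x₂,x₃,x₄)` is the
binary digit of `C` at position `8x₁ + 4x₂ + 2x₃ + x₄`. -/
def ruleOfCode (C : ℕ) (x : Fin 4 → Fin 2) : Fin 2 :=
  if C.testBit (8 * (x 0 : ℕ) + 4 * (x 1 : ℕ) + 2 * (x 2 : ℕ) + (x 3 : ℕ)) then 1 else 0

/-- The step function: `Θ(m) = 1` if `m > 0` and `Θ(m) = 0` otherwise. -/
def theta (m : ℤ) : ℤ := if 0 < m then 1 else 0

/-- The delta function: `δ_{m,n} = 1` if `m = n` and `δ_{m,n} = 0` otherwise. -/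
def deltaZ (m k : ℤ) : ℤ := if m = k then 1 else 0

theorem gap_two (s : ℤ → ℤ) (hs : StrictMono s) (j : ℤ) :
    2 = s (j + 1) - s j ↔ (s j + 1 ∉ Set.range s ∧ s j + 2 ∈ Set.range s) := by
  have hj : s j < s (j + 1) := hs (by omega)
  constructor
  · intro h
    refine ⟨?_, j + 1, by omega⟩
    rintro ⟨k, hk⟩
    have h1 : j < k := hs.lt_iff_lt.mp (by omega)
    have h2 : k < j + 1 := hs.lt_iff_lt.mp (by omega)
    omega
  · rintro ⟨h1, k, hk⟩
    have h3 : j < k := hs.lt_iff_lt.mp (by omega)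
    have h4 : s (j + 1) ≤ s k := hs.monotone (by omega)
    have h5 : s (j + 1) ≠ s j + 1 := fun h => h1 ⟨j + 1, h⟩
    omega

theorem mem_iff (s : ℤ → ℤ) (hs : StrictMono s) (i : ℤ) :
    i ∈ Set.range (fun i : ℤ => s i - 1 + deltaZ 2 (s (i + 1) - s i)) ↔
      (i ∈ Set.range s ∧ i + 1 ∉ Set.range s ∧ i + 2 ∈ Set.range s) ∨
      (i + 1 ∈ Set.range s ∧ ¬ (i + 2 ∉ Set.range s ∧ i + 3 ∈ Set.range s)) := by
  constructor
  · rintro ⟨j, hj⟩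
    simp only [deltaZ] at hj
    have hg := gap_two s hs j
    split_ifs at hj with h
    · have e : s j = i := by omega
      rw [e] at hg
      exact Or.inl ⟨⟨j, e⟩, hg.mp (by omega)⟩
    · have e : s j = i + 1 := by omega
      rw [e, add_assoc, add_assoc] at hg
      exact Or.inr ⟨⟨j, e⟩, fun hh => h (by rw [e]; exact hg.mpr hh)⟩
  · rintro (⟨⟨j, rfl⟩, h⟩ | ⟨⟨j, hj⟩, h⟩)
    · refine ⟨j, ?_⟩
      simp only [deltaZ]
      rw [if_pos ((gap_two s hs j).mpr h)]
      omega
    · refine ⟨j, ?_⟩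
      have hg := gap_two s hs j
      simp only [deltaZ]
      rw [if_neg]
      · omega
      · intro h2
        have := hg.mp h2
        rw [hj, add_assoc, add_assoc] at this
        exact h this

/-- For the conservative 4-input rule with code number 56528 and the particle
mapping `g(x₀,x₁,x₂,x₃) = x₁ - 1 + δ_{2, x₂ - x₁}`: for every strictly increasing `s : ℤ → ℤ`,
the bisequence `t = g_{∞,1}(s)`, `t i = g (s (i-1)) (s i) (s (i+1)) (s (i+2))`,
is strictly increasing and `φ(t) = f_∞(φ(s))`. -/
theorem stmt_15 (s : ℤ → ℤ) (hs : StrictMono s) :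
    StrictMono (fun i : ℤ => s i - 1 + deltaZ 2 (s (i + 1) - s i)) ∧
    ∀ i : ℤ,
      phi (fun i : ℤ => s i - 1 + deltaZ 2 (s (i + 1) - s i)) i =
        ruleOfCode 56528 (fun k : Fin 4 => phi s (i + (k : ℕ))) := by
  refine ⟨?_, fun i => ?_⟩
  · intro a b hab
    have h1 : s (a + 1) ≤ s b := hs.monotone (by omega)
    have h2 : s a < s (a + 1) := hs (by omega)
    simp only [deltaZ]
    split_ifs <;> omega
  · have hm := mem_iff s hs i
    unfold phi ruleOfCode
    generalize (i ∈ Set.range (fun i : ℤ => s i - 1 + deltaZ 2 (s (i + 1) - s i))) = P at hm ⊢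
    by_cases h0 : i ∈ Set.range s <;> by_cases h1 : i + 1 ∈ Set.range s <;>
      by_cases h2 : i + 2 ∈ Set.range s <;> by_cases h3 : i + 3 ∈ Set.range s <;>
      simp only [h0, h1, h2, h3, not_true_eq_false, not_false_eq_true, and_true, and_false,
        true_and, false_and, or_true, or_false, or_self, and_self, iff_true, iff_false] at hm <;>
      simp [h0, h1, h2, h3, hm, -Set.mem_range] <;> decide
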